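/- Assume g is strictly monotone in a neighborhood of each of its positive zeroes. Then the sets S_± := {a > 0 : g(a) = 0, −1/V_s'(0) + a · PV∫₀^∞ g(u)/(a−u) du > 0, and ±g is strictly increasing on a neighborhood of a} are finite; that is, n₊ and n₋ are finite. -/

import Mathlib

open MeasureTheory Filter

/-- `HasPV g a L` : the principal value `PV ∫₀^∞ g(u)/(a-u) du` exists and equals `L`. -/
def HasPV (g : ℝ → ℝ) (a L : ℝ) : Prop :=
  Filter.Tendsto (fun ε : ℝ => ∫ u in {u : ℝ | 0 < u ∧ ε < |u - a|}, g u / (a - u))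
    (nhdsWithin 0 (Set.Ioi 0)) (nhds L)

/-- The set whose cardinality is `n₊`: positive zeroes `a` of `g` with
`-1/V_s'(0) + a · PV∫₀^∞ g(u)/(a-u) du > 0` near which `g` is strictly increasing. -/
def Splus (Vs g : ℝ → ℝ) : Set ℝ :=
  {a : ℝ | 0 < a ∧ g a = 0 ∧
    (∃ L : ℝ, HasPV g a L ∧ 0 < -1 / deriv Vs 0 + a * L) ∧
    ∃ ε > (0 : ℝ), StrictMonoOn g (Set.Ioo (a - ε) (a + ε))}

/-- The set whose cardinality is `n₋`: same but with `g` strictly decreasing near `a`. -/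
def Sminus (Vs g : ℝ → ℝ) : Set ℝ :=
  {a : ℝ | 0 < a ∧ g a = 0 ∧
    (∃ L : ℝ, HasPV g a L ∧ 0 < -1 / deriv Vs 0 + a * L) ∧
    ∃ ε > (0 : ℝ), StrictAntiOn g (Set.Ioo (a - ε) (a + ε))}

/-!
In the velocity variable `u = V z`, with `V' → ℓ` at infinity, one has `g = -(V⁻¹)''`, so
`∫₀^∞ g = 1 / V'(0) - 1 / ℓ < 1 / V'(0)`. At a zero `a` of `g` the principal value `L` is an
ordinary integral, bounded uniformly in `a`, so `1 / V'(0) < a L` keeps `a` away from `0`. The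
expansion `a² / (a - u) = a + u + u² / (a - u)`, whose last term contributes the principal value of
`u² g(u)` and is bounded in the same way, gives `a L = ∫₀^∞ g + O(1 / a)`, so the inequality also
keeps `a` bounded. Isolated zeros in a compact interval are finitely many.
-/

open Set Asymptotics
open scoped Topology NNReal

/-! ## Principal values at a zero -/

section DivSub

variable {f : ℝ → ℝ} {s : Set ℝ} {a : ℝ} {K : ℝ≥0}

lemma abs_div_sub_le_indicator_add (hf : LipschitzOnWith K f s) (ha : a ∈ s) (hfa : f a = 0)
    {u : ℝ} (hu : u ∈ s) :
    |f u / (a - u)| ≤ (Metric.ball a 1).indicator (fun _ ↦ (K : ℝ)) u + |f u| := by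
  rw [abs_div, abs_sub_comm]
  by_cases hua : u ∈ Metric.ball a 1
  · have hquot : |f u| / |u - a| ≤ K := by
      refine div_le_of_le_mul₀ (abs_nonneg _) K.coe_nonneg ?_
      simpa [Real.dist_eq, hfa] using hf.dist_le_mul u hu a ha
    rw [indicator_of_mem hua]
    exact hquot.trans (le_add_of_nonneg_right (abs_nonneg _))
  · rw [indicator_of_notMem hua, zero_add]
    exact div_le_self (abs_nonneg _) (by simpa [Real.dist_eq] using hua)

lemma integrable_indicator_ball_const (a r c : ℝ) :
    Integrable ((Metric.ball a r).indicator fun _ ↦ c) :=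
  (integrable_indicator_iff measurableSet_ball).2 (integrableOn_const measure_ball_lt_top.ne)

lemma integrableOn_div_sub (hs : MeasurableSet s) (hf : LipschitzOnWith K f s) (ha : a ∈ s)
    (hfa : f a = 0) (hint : IntegrableOn f s) : IntegrableOn (fun u ↦ f u / (a - u)) s := by
  refine ((integrable_indicator_ball_const a 1 K).integrableOn.add hint.abs).mono' ?_ ?_
  · exact (hint.aemeasurable.div (by fun_prop)).aestronglyMeasurable
  · exact (ae_restrict_mem hs).mono fun u hu ↦ abs_div_sub_le_indicator_add hf ha hfa hu

lemma abs_integral_div_sub_le (hs : MeasurableSet s) (hf : LipschitzOnWith K f s) (ha : a ∈ s)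
    (hfa : f a = 0) (hint : IntegrableOn f s) :
    |∫ u in s, f u / (a - u)| ≤ 2 * K + ∫ u in s, |f u| := by
  have hball := integrable_indicator_ball_const a 1 K
  calc |∫ u in s, f u / (a - u)|
      ≤ ∫ u in s, ((Metric.ball a 1).indicator (fun _ ↦ (K : ℝ)) u + |f u|) := by
        rw [← Real.norm_eq_abs]
        exact norm_integral_le_of_norm_le (hball.integrableOn.fun_add hint.abs)
          ((ae_restrict_mem hs).mono fun u hu ↦ abs_div_sub_le_indicator_add hf ha hfa hu)
    _ = (∫ u in s, (Metric.ball a 1).indicator (fun _ ↦ (K : ℝ)) u) + ∫ u in s, |f u| :=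
        integral_add hball.integrableOn hint.abs
    _ ≤ (∫ u, (Metric.ball a 1).indicator (fun _ ↦ (K : ℝ)) u) + ∫ u in s, |f u| := by
        gcongr
        · exact .of_forall (indicator_nonneg fun _ _ ↦ K.coe_nonneg)
        · exact Measure.restrict_le_self
    _ = 2 * K + ∫ u in s, |f u| := by
        rw [integral_indicator_const _ measurableSet_ball, Real.volume_real_ball zero_le_one]
        simp

lemma integral_sq_mul_div_sub (hfa : f a = 0) (h0 : IntegrableOn f s)
    (h1 : IntegrableOn (fun u ↦ u * f u) s) (hdiv : IntegrableOn (fun u ↦ f u / (a - u)) s) :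
    ∫ u in s, u ^ 2 * f u / (a - u) =
      a * (a * (∫ u in s, f u / (a - u)) - ∫ u in s, f u) - ∫ u in s, u * f u := by
  have hpointwise (u : ℝ) :
      u ^ 2 * f u / (a - u) = a * (a * (f u / (a - u)) - f u) - u * f u := by
    rcases eq_or_ne u a with rfl | hu
    · simp [hfa]
    · have : a - u ≠ 0 := sub_ne_zero.2 hu.symm
      field_simp
      ring
  have hdiff : IntegrableOn (fun u ↦ a * (f u / (a - u)) - f u) s := (hdiv.const_mul a).sub h0
  simp_rw [hpointwise]
  rw [integral_sub (hdiff.const_mul a) h1, integral_const_mul,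
    integral_sub (hdiv.const_mul a) h0, integral_const_mul]

lemma integrableOn_id_mul_of_integrableOn_sq_mul (h0 : IntegrableOn f s)
    (h2 : IntegrableOn (fun u ↦ u ^ 2 * f u) s) : IntegrableOn (fun u ↦ u * f u) s := by
  refine (h0.norm.add h2.norm).mono' ?_ (.of_forall fun u ↦ ?_)
  · exact (aemeasurable_id.mul h0.aemeasurable).aestronglyMeasurable
  · have hu : |u| ≤ 1 + |u| ^ 2 := by nlinarith [sq_nonneg (|u| - 1)]
    simpa [add_mul] using mul_le_mul_of_nonneg_right hu (abs_nonneg (f u))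

end DivSub

namespace HasPV

variable {f : ℝ → ℝ} {a L : ℝ} {K : ℝ≥0}

lemma of_integrableOn (h : IntegrableOn (fun u ↦ f u / (a - u)) (Ioi 0)) :
    HasPV f a (∫ u in Ioi 0, f u / (a - u)) := by
  have hcover : AECover (volume.restrict (Ioi 0)) (𝓝[>] 0) fun ε : ℝ ↦ {u : ℝ | ε < |u - a|} := by
    refine ⟨?_, fun ε ↦ measurableSet_lt (by fun_prop) (by fun_prop)⟩
    filter_upwards [ae_restrict_of_ae (volume.ae_ne a)] with u hu
    exact nhdsWithin_le_nhds (eventually_lt_nhds (abs_pos.2 (sub_ne_zero.2 hu)))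
  refine (hcover.integral_tendsto_of_countably_generated h).congr fun ε ↦ ?_
  rw [Measure.restrict_restrict (hcover.measurableSet ε), inter_comm]
  rfl

lemma eq_integral (hL : HasPV f a L) (h : IntegrableOn (fun u ↦ f u / (a - u)) (Ioi 0)) :
    L = ∫ u in Ioi 0, f u / (a - u) :=
  tendsto_nhds_unique hL (of_integrableOn h)

lemma abs_le (hL : HasPV f a L) (ha : 0 < a) (hfa : f a = 0) (hf : LipschitzOnWith K f (Ioi 0))
    (hint : IntegrableOn f (Ioi 0)) : |L| ≤ 2 * K + ∫ u in Ioi 0, |f u| := by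
  rw [hL.eq_integral (integrableOn_div_sub measurableSet_Ioi hf ha hfa hint)]
  exact abs_integral_div_sub_le measurableSet_Ioi hf ha hfa hint

lemma abs_mul_sub_integral_le {K₀ K₂ : ℝ≥0} (hL : HasPV f a L) (ha : 0 < a) (hfa : f a = 0)
    (hf : LipschitzOnWith K₀ f (Ioi 0)) (hf₂ : LipschitzOnWith K₂ (fun u ↦ u ^ 2 * f u) (Ioi 0))
    (hint : IntegrableOn f (Ioi 0)) (hint₂ : IntegrableOn (fun u ↦ u ^ 2 * f u) (Ioi 0)) :
    |a * (a * L - ∫ u in Ioi 0, f u)| ≤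
      2 * K₂ + (∫ u in Ioi 0, |u ^ 2 * f u|) + |∫ u in Ioi 0, u * f u| := by
  have hdiv := integrableOn_div_sub measurableSet_Ioi hf ha hfa hint
  have hexpand := integral_sq_mul_div_sub hfa hint
    (integrableOn_id_mul_of_integrableOn_sq_mul hint hint₂) hdiv
  rw [hL.eq_integral hdiv, sub_eq_iff_eq_add.1 hexpand.symm]
  refine (abs_add_le _ _).trans ?_
  gcongr
  exact abs_integral_div_sub_le measurableSet_Ioi hf₂ ha (by simp [hfa]) hint₂

end HasPV

/-! ## Finiteness of the admissible zeros -/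

lemma eventually_ne_of_injOn {X Y : Type*} [TopologicalSpace X] {g : X → Y} {s : Set X} {a : X}
    (hs : s ∈ 𝓝 a) (hg : InjOn g s) : ∀ᶠ u in 𝓝[≠] a, g u ≠ g a := by
  filter_upwards [nhdsWithin_le_nhds hs, self_mem_nhdsWithin] with u hu hne
  exact hg.ne hu (mem_of_mem_nhds hs) hne

lemma eventually_ne_zero_of_strictMonoOn_or_strictAntiOn {g : ℝ → ℝ} {a ε : ℝ} (hε : 0 < ε)
    (hga : g a = 0)
    (h : StrictMonoOn g (Ioo (a - ε) (a + ε)) ∨ StrictAntiOn g (Ioo (a - ε) (a + ε))) :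
    ∀ᶠ u in 𝓝[≠] a, g u ≠ 0 := by
  have hnhds : Ioo (a - ε) (a + ε) ∈ 𝓝 a := Ioo_mem_nhds (by linarith) (by linarith)
  simpa only [hga] using eventually_ne_of_injOn hnhds (h.elim (·.injOn) (·.injOn))

lemma finite_inter_preimage_zero_of_isCompact {X M : Type*} [TopologicalSpace X]
    [TopologicalSpace M] [T1Space M] [Zero M] {k : Set X} (hk : IsCompact k) {g : X → M}
    (hg : ContinuousOn g k)
    (hiso : ∀ a ∈ k, g a = 0 → ∀ᶠ u in 𝓝[≠] a, g u ≠ 0) : (k ∩ g ⁻¹' {0}).Finite := by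
  by_contra hinf
  obtain ⟨a, hak, hacc⟩ := Set.Infinite.exists_accPt_of_subset_isCompact hinf hk inter_subset_left
  rw [accPt_iff_frequently_nhdsNE] at hacc
  refine hacc ?_
  by_cases hga : g a = 0
  · filter_upwards [hiso a hak hga] with u hu using fun h ↦ hu h.2
  · have hne : ∀ᶠ u in 𝓝[k] a, g u ≠ 0 := (hg a hak).eventually_ne hga
    filter_upwards [nhdsWithin_le_nhds (eventually_nhdsWithin_iff.1 hne)] with u hu
    exact fun h ↦ hu h.1 h.2

section Zeros

variable {g : ℝ → ℝ} {c : ℝ} {K₀ K₂ : ℝ≥0}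

lemma exists_Icc_of_hasPV_of_lt_mul (hc : 0 < c) (hg : LipschitzOnWith K₀ g (Ioi 0))
    (hg₂ : LipschitzOnWith K₂ (fun u ↦ u ^ 2 * g u) (Ioi 0)) (hint : IntegrableOn g (Ioi 0))
    (hint₂ : IntegrableOn (fun u ↦ u ^ 2 * g u) (Ioi 0)) (hgc : ∫ u in Ioi 0, g u < c) :
    ∃ δ > 0, ∃ R, ∀ a L, 0 < a → g a = 0 → HasPV g a L → c < a * L → a ∈ Icc δ R := by
  set I := ∫ u in Ioi 0, g u
  set C := 2 * K₀ + ∫ u in Ioi 0, |g u|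
  set C₂ := 2 * K₂ + (∫ u in Ioi 0, |u ^ 2 * g u|) + |∫ u in Ioi 0, u * g u|
  have hC : 0 < C + 1 := by positivity
  refine ⟨c / (C + 1), div_pos hc hC, C₂ / (c - I), fun a L ha hga hL hcL ↦ ⟨?_, ?_⟩⟩
  · rw [div_le_iff₀ hC]
    calc c ≤ a * L := hcL.le
      _ ≤ a * (C + 1) := by
        gcongr
        linarith [(abs_le.1 (hL.abs_le ha hga hg hint)).2]
  · rw [le_div_iff₀ (sub_pos.2 hgc)]
    calc a * (c - I) ≤ a * (a * L - I) := by gcongr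
      _ ≤ C₂ := (abs_le.1 (hL.abs_mul_sub_integral_le ha hga hg hg₂ hint hint₂)).2

lemma finite_zeros_hasPV_of_lt_mul (hc : 0 < c) (hg : LipschitzOnWith K₀ g (Ioi 0))
    (hg₂ : LipschitzOnWith K₂ (fun u ↦ u ^ 2 * g u) (Ioi 0)) (hint : IntegrableOn g (Ioi 0))
    (hint₂ : IntegrableOn (fun u ↦ u ^ 2 * g u) (Ioi 0)) (hgc : ∫ u in Ioi 0, g u < c)
    (hiso : ∀ a, 0 < a → g a = 0 → ∀ᶠ u in 𝓝[≠] a, g u ≠ 0) :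
    {a | 0 < a ∧ g a = 0 ∧ ∃ L, HasPV g a L ∧ c < a * L}.Finite := by
  obtain ⟨δ, hδ, R, hbound⟩ := exists_Icc_of_hasPV_of_lt_mul hc hg hg₂ hint hint₂ hgc
  have hpos : Icc δ R ⊆ Ioi 0 := fun a ha ↦ hδ.trans_le ha.1
  refine (finite_inter_preimage_zero_of_isCompact isCompact_Icc (hg.continuousOn.mono hpos)
    fun a ha ↦ hiso a (hpos ha)).subset ?_
  rintro a ⟨ha, hga, L, hL, hcL⟩
  exact ⟨hbound a L ha hga hL hcL, hga⟩

end Zeros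

/-! ## Functions with quartic decay -/

section Decay

variable {g : ℝ → ℝ} {C : ℝ} {p : ℕ}

lemma pow_le_one_add_sq (hp : p ≤ 2) (u : ℝ) : u ^ p ≤ 1 + u ^ 2 := by
  interval_cases p <;> nlinarith [sq_nonneg (u - 1)]

lemma integrableOn_pow_mul_of_decay (hp : p ≤ 2) (hcont : ContinuousOn g (Ioi 0))
    (hdecay : ∀ u, 0 < u → (1 + u ^ 2) ^ 2 * |g u| ≤ C) :
    IntegrableOn (fun u ↦ u ^ p * g u) (Ioi 0) := by
  refine (integrable_inv_one_add_sq.const_mul C).integrableOn.mono' ?_ ?_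
  · exact ((continuous_pow p).continuousOn.mul hcont).aestronglyMeasurable measurableSet_Ioi
  · refine (ae_restrict_mem measurableSet_Ioi).mono fun u (hu : 0 < u) ↦ ?_
    rw [Real.norm_eq_abs, abs_mul, abs_of_pos (by positivity), ← div_eq_mul_inv,
      le_div_iff₀ (by positivity)]
    calc u ^ p * |g u| * (1 + u ^ 2) ≤ (1 + u ^ 2) * |g u| * (1 + u ^ 2) := by
          gcongr
          exact pow_le_one_add_sq hp u
      _ = (1 + u ^ 2) ^ 2 * |g u| := by ring
      _ ≤ C := hdecay u hu

lemma lipschitzOnWith_pow_mul_of_decay (hp : p ≤ 2) {C' : ℝ}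
    (hdiff : ∀ u, 0 < u → DifferentiableAt ℝ g u)
    (hdecay : ∀ u, 0 < u → (1 + u ^ 2) ^ 2 * |g u| ≤ C)
    (hdecay' : ∀ u, 0 < u → (1 + u ^ 2) * |deriv g u| ≤ C') :
    LipschitzOnWith (2 * C + C').toNNReal (fun u ↦ u ^ p * g u) (Ioi 0) := by
  have hderiv (u : ℝ) (hu : 0 < u) :
      HasDerivAt (fun u ↦ u ^ p * g u) (p * u ^ (p - 1) * g u + u ^ p * deriv g u) u :=
    (hasDerivAt_pow p u).mul (hdiff u hu).hasDerivAt
  refine (convex_Ioi 0).lipschitzOnWith_of_nnnorm_hasDerivWithin_le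
    (fun u hu ↦ (hderiv u hu).hasDerivWithinAt) fun u (hu : 0 < u) ↦ ?_
  refine NNReal.le_toNNReal_of_coe_le ((norm_add_le _ _).trans (add_le_add ?_ ?_))
  · rw [Real.norm_eq_abs, abs_mul, abs_of_nonneg (by positivity)]
    calc p * u ^ (p - 1) * |g u| ≤ 2 * (1 + u ^ 2) ^ 2 * |g u| := by
          gcongr
          · exact_mod_cast hp
          · exact (pow_le_one_add_sq (by lia) u).trans (le_self_pow₀ (by nlinarith) two_ne_zero)
      _ ≤ 2 * C := by
          rw [mul_assoc]
          gcongr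
          exact hdecay u hu
  · rw [Real.norm_eq_abs, abs_mul, abs_of_pos (pow_pos hu p)]
    exact (mul_le_mul_of_nonneg_right (pow_le_one_add_sq hp u) (abs_nonneg _)).trans
      (hdecay' u hu)

end Decay

/-! ## Shear profiles -/

/-- A shear profile `V` on the half line, asymptotically uniform with slope `ℓ`: `V` increases from
`0` with positive slope and its higher derivatives decay algebraically. Values at negative arguments
only serve to make sense of the derivatives at `0`. -/
structure IsShearProfile (V : ℝ → ℝ) (ℓ : ℝ) : Prop where
  contDiff : ContDiff ℝ 3 V
  map_zero : V 0 = 0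
  deriv_pos : ∀ z, 0 ≤ z → 0 < deriv V z
  slope_pos : 0 < ℓ
  tendsto_deriv : Tendsto (deriv V) atTop (𝓝 ℓ)
  isBigO_deriv_two : deriv (deriv V) =O[atTop] fun z ↦ (z ^ 4)⁻¹
  isBigO_deriv_three : deriv (deriv (deriv V)) =O[atTop] fun z ↦ (z ^ 2)⁻¹

lemma exists_forall_norm_le_of_continuousOn_Ici {E : Type*} [SeminormedAddCommGroup E] {f : ℝ → E}
    {a : ℝ} (hf : ContinuousOn f (Ici a)) (hO : f =O[atTop] fun _ ↦ (1 : ℝ)) :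
    ∃ C, ∀ z, a ≤ z → ‖f z‖ ≤ C := by
  obtain ⟨C, hC⟩ := hO.bound
  obtain ⟨N, hN⟩ := eventually_atTop.1 hC
  obtain ⟨B, hB⟩ := isCompact_Icc.exists_bound_of_continuousOn
    (hf.mono (Icc_subset_Ici_self : Icc a N ⊆ _))
  refine ⟨max B C, fun z hz ↦ ?_⟩
  rcases le_total z N with hzN | hNz
  · exact (hB z ⟨hz, hzN⟩).trans (le_max_left _ _)
  · exact ((hN z hNz).trans_eq (by simp)).trans (le_max_right _ _)

lemma hasDerivAt_of_comp_eventuallyEq {𝕜 : Type*} [NontriviallyNormedField 𝕜] [CompleteSpace 𝕜]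
    {V k ψ : 𝕜 → 𝕜} {V' ψ' z : 𝕜} (hV : HasStrictDerivAt V V' z) (hV' : V' ≠ 0)
    (hψ : HasDerivAt ψ ψ' z) (h : k ∘ V =ᶠ[𝓝 z] ψ) : HasDerivAt k (ψ' / V') (V z) := by
  set W := hV.localInverse V V' z hV'
  have hW : HasDerivAt W V'⁻¹ (V z) := (hV.to_localInverse hV').hasDerivAt
  have hWz : W (V z) = z := (hV.eventually_left_inverse hV').self_of_nhds
  have hWtendsto : Tendsto W (𝓝 (V z)) (𝓝 z) := by simpa only [hWz] using hW.continuousAt.tendsto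
  have hk : k =ᶠ[𝓝 (V z)] ψ ∘ W := by
    filter_upwards [hV.eventually_right_inverse hV', hWtendsto.eventually h] with u hVW hkV
    rw [Function.comp_apply, ← hkV, Function.comp_apply, hVW]
  rw [div_eq_mul_inv]
  exact ((hWz.symm ▸ hψ).comp (V z) hW).congr_of_eventuallyEq hk

namespace IsShearProfile

variable {V g : ℝ → ℝ} {ℓ z : ℝ}

section Regularity

variable (hV : IsShearProfile V ℓ)
include hV

lemma contDiff_deriv : ContDiff ℝ 2 (deriv V) :=
  (contDiff_succ_iff_deriv (n := 2).1 hV.contDiff).2.2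

lemma contDiff_deriv_two : ContDiff ℝ 1 (deriv (deriv V)) :=
  (contDiff_succ_iff_deriv (n := 1).1 hV.contDiff_deriv).2.2

lemma continuous_deriv_three : Continuous (deriv (deriv (deriv V))) :=
  hV.contDiff_deriv_two.continuous_deriv_one

lemma hasDerivAt (z : ℝ) : HasDerivAt V (deriv V z) z :=
  (hV.contDiff.differentiable three_ne_zero z).hasDerivAt

lemma hasDerivAt_deriv (z : ℝ) : HasDerivAt (deriv V) (deriv (deriv V) z) z :=
  (hV.contDiff_deriv.differentiable two_ne_zero z).hasDerivAt

lemma hasDerivAt_deriv_two (z : ℝ) :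
    HasDerivAt (deriv (deriv V)) (deriv (deriv (deriv V)) z) z :=
  (hV.contDiff_deriv_two.differentiable one_ne_zero z).hasDerivAt

end Regularity

section Growth

variable (hV : IsShearProfile V ℓ)
include hV

lemma isBigO_deriv : deriv V =O[atTop] fun _ ↦ (1 : ℝ) :=
  hV.tendsto_deriv.isBigO_one ℝ

lemma isBigO_inv_deriv_pow (n : ℕ) : (fun z ↦ (deriv V z ^ n)⁻¹) =O[atTop] fun _ ↦ (1 : ℝ) :=
  ((hV.tendsto_deriv.pow n).inv₀ (pow_ne_zero n hV.slope_pos.ne')).isBigO_one ℝ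

lemma exists_forall_deriv_mem_Icc : ∃ m > 0, ∃ M, ∀ z, 0 ≤ z → deriv V z ∈ Icc m M := by
  have hcont : ContinuousOn (deriv V) (Ici 0) := hV.contDiff_deriv.continuous.continuousOn
  obtain ⟨M, hM⟩ := exists_forall_norm_le_of_continuousOn_Ici hcont hV.isBigO_deriv
  obtain ⟨B, hB⟩ := exists_forall_norm_le_of_continuousOn_Ici
    (hcont.inv₀ fun z hz ↦ (hV.deriv_pos z hz).ne') (by simpa using hV.isBigO_inv_deriv_pow 1)
  have hinv (z : ℝ) (hz : 0 ≤ z) : (deriv V z)⁻¹ ≤ B := (le_abs_self _).trans (hB z hz)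
  have hBpos : 0 < B := (inv_pos.2 (hV.deriv_pos 0 le_rfl)).trans_le (hinv 0 le_rfl)
  exact ⟨B⁻¹, inv_pos.2 hBpos, M, fun z hz ↦
    ⟨inv_le_of_inv_le₀ (hV.deriv_pos z hz) (hinv z hz), (le_abs_self _).trans (hM z hz)⟩⟩

lemma exists_forall_mem_Icc_mul : ∃ m > 0, ∃ M, ∀ z, 0 ≤ z → V z ∈ Icc (m * z) (M * z) := by
  obtain ⟨m, hm, M, hmM⟩ := hV.exists_forall_deriv_mem_Icc
  have hcont : ContinuousOn V (Ici 0) := hV.contDiff.continuous.continuousOn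
  have hdiff : DifferentiableOn ℝ V (interior (Ici 0)) :=
    (hV.contDiff.differentiable three_ne_zero).differentiableOn
  refine ⟨m, hm, M, fun z hz ↦ ⟨?_, ?_⟩⟩
  · simpa [hV.map_zero] using (convex_Ici 0).mul_sub_le_image_sub_of_le_deriv hcont hdiff
      (fun x hx ↦ (hmM x (interior_subset hx)).1) 0 self_mem_Ici z hz hz
  · simpa [hV.map_zero] using (convex_Ici 0).image_sub_le_mul_sub_of_deriv_le hcont hdiff
      (fun x hx ↦ (hmM x (interior_subset hx)).2) 0 self_mem_Ici z hz hz

lemma pos (hz : 0 < z) : 0 < V z := by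
  obtain ⟨m, hm, M, hmM⟩ := hV.exists_forall_mem_Icc_mul
  exact (mul_pos hm hz).trans_le (hmM z hz.le).1

lemma tendsto_atTop : Tendsto V atTop atTop := by
  obtain ⟨m, hm, M, hmM⟩ := hV.exists_forall_mem_Icc_mul
  refine tendsto_atTop_mono' _ ?_ (tendsto_id.const_mul_atTop hm)
  filter_upwards [eventually_ge_atTop 0] with z hz using (hmM z hz).1

lemma image_Ioi : V '' Ioi 0 = Ioi 0 := by
  refine Subset.antisymm (image_subset_iff.2 fun z hz ↦ hV.pos hz) fun u (hu : 0 < u) ↦ ?_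
  obtain ⟨z, hz, rfl⟩ := isPreconnected_Ici.intermediate_value_Ici self_mem_Ici
    (le_principal_iff.2 (Ici_mem_atTop 0)) hV.contDiff.continuous.continuousOn hV.tendsto_atTop
    (hV.map_zero.trans_le hu.le)
  refine ⟨z, mem_Ioi.2 (lt_of_le_of_ne (mem_Ici.1 hz) ?_), rfl⟩
  rintro rfl
  exact hu.ne' hV.map_zero

lemma monotoneOn : MonotoneOn V (Ioi 0) :=
  (strictMonoOn_of_deriv_pos (convex_Ioi 0) hV.contDiff.continuous.continuousOn
    fun z hz ↦ hV.deriv_pos z (mem_Ioi.1 (interior_subset hz)).le).monotoneOn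

lemma isBigO_one_add_sq : (fun z ↦ 1 + V z ^ 2) =O[atTop] fun z ↦ z ^ 2 := by
  obtain ⟨m, hm, M, hmM⟩ := hV.exists_forall_mem_Icc_mul
  refine .of_bound (1 + M ^ 2) ?_
  filter_upwards [eventually_ge_atTop 1] with z hz
  have hz0 : 0 ≤ z := zero_le_one.trans hz
  have hVz : 0 ≤ V z := (mul_nonneg hm.le hz0).trans (hmM z hz0).1
  rw [Real.norm_of_nonneg (by positivity), Real.norm_of_nonneg (by positivity)]
  calc 1 + V z ^ 2 ≤ z ^ 2 + (M * z) ^ 2 := by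
        gcongr
        · exact one_le_pow₀ hz
        · exact (hmM z hz0).2
    _ = (1 + M ^ 2) * z ^ 2 := by ring

end Growth

section VelocityVariable

variable (hV : IsShearProfile V ℓ)
  (hg : ∀ z, 0 < z → g (V z) = deriv (deriv V) z / deriv V z ^ 3)
include hV hg

lemma exists_decay : ∃ C, ∀ u, 0 < u → (1 + u ^ 2) ^ 2 * |g u| ≤ C := by
  have hcont : ContinuousOn
      (fun z ↦ (1 + V z ^ 2) ^ 2 * (deriv (deriv V) z * (deriv V z ^ 3)⁻¹)) (Ici 0) := by
    have h0 := hV.contDiff.continuous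
    have h1 := hV.contDiff_deriv.continuous
    have h2 := hV.contDiff_deriv_two.continuous
    exact .mul (by fun_prop) (.mul (by fun_prop)
      (.inv₀ (by fun_prop) fun z hz ↦ pow_ne_zero 3 (hV.deriv_pos z hz).ne'))
  have hO : (fun z ↦ (1 + V z ^ 2) ^ 2 * (deriv (deriv V) z * (deriv V z ^ 3)⁻¹)) =O[atTop]
      fun _ ↦ (1 : ℝ) := by
    refine ((hV.isBigO_one_add_sq.pow 2).mul
      (hV.isBigO_deriv_two.mul (hV.isBigO_inv_deriv_pow 3))).trans_eventuallyEq ?_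
    filter_upwards [eventually_gt_atTop 0] with z hz
    field_simp
  obtain ⟨C, hC⟩ := exists_forall_norm_le_of_continuousOn_Ici hcont hO
  refine ⟨C, fun u hu ↦ ?_⟩
  obtain ⟨z, hz : 0 < z, rfl⟩ := hV.image_Ioi.superset hu
  rw [hg z hz, div_eq_mul_inv]
  simpa [abs_mul, abs_of_pos (show 0 < 1 + V z ^ 2 by positivity)] using hC z hz.le

lemma hasDerivAt_comp (hz : 0 < z) :
    HasDerivAt g ((deriv (deriv (deriv V)) z * deriv V z - 3 * deriv (deriv V) z ^ 2) *
      (deriv V z ^ 5)⁻¹) (V z) := by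
  have hne : deriv V z ≠ 0 := (hV.deriv_pos z hz.le).ne'
  have hψ := (hV.hasDerivAt_deriv_two z).div ((hV.hasDerivAt_deriv z).pow 3) (pow_ne_zero 3 hne)
  have heq : g ∘ V =ᶠ[𝓝 z] deriv (deriv V) / deriv V ^ 3 := by
    filter_upwards [eventually_gt_nhds hz] with x hx using hg x hx
  refine (hasDerivAt_of_comp_eventuallyEq
    (hV.contDiff.hasStrictDerivAt three_ne_zero) hne hψ heq).congr_deriv ?_
  simp only [Pi.pow_apply]
  field_simp
  ring

lemma differentiableAt {u : ℝ} (hu : 0 < u) : DifferentiableAt ℝ g u := by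
  obtain ⟨z, hz : 0 < z, rfl⟩ := hV.image_Ioi.superset hu
  exact (hV.hasDerivAt_comp hg hz).differentiableAt

lemma exists_deriv_decay : ∃ C, ∀ u, 0 < u → (1 + u ^ 2) * |deriv g u| ≤ C := by
  set N : ℝ → ℝ := fun z ↦ deriv (deriv (deriv V)) z * deriv V z - 3 * deriv (deriv V) z ^ 2
  have hcont : ContinuousOn (fun z ↦ (1 + V z ^ 2) * (N z * (deriv V z ^ 5)⁻¹)) (Ici 0) := by
    have h0 := hV.contDiff.continuous
    have h1 := hV.contDiff_deriv.continuous
    have h2 := hV.contDiff_deriv_two.continuous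
    have h3 := hV.continuous_deriv_three
    exact .mul (by fun_prop) (.mul (by fun_prop)
      (.inv₀ (by fun_prop) fun z hz ↦ pow_ne_zero 5 (hV.deriv_pos z hz).ne'))
  have hN : N =O[atTop] fun z ↦ (z ^ 2)⁻¹ := by
    have hsq : (fun z ↦ deriv (deriv V) z ^ 2) =O[atTop] fun z ↦ (z ^ 2)⁻¹ := by
      refine (hV.isBigO_deriv_two.pow 2).trans (.of_bound' ?_)
      filter_upwards [eventually_ge_atTop 1] with z hz
      rw [inv_pow, norm_inv, norm_inv, ← pow_mul, norm_pow, norm_pow]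
      have : 1 ≤ ‖z‖ := hz.trans (le_abs_self z)
      gcongr
      norm_num
    have hprod : (fun z ↦ deriv (deriv (deriv V)) z * deriv V z) =O[atTop] fun z ↦ (z ^ 2)⁻¹ := by
      simpa using hV.isBigO_deriv_three.mul hV.isBigO_deriv
    exact hprod.sub (hsq.const_mul_left 3)
  have hO : (fun z ↦ (1 + V z ^ 2) * (N z * (deriv V z ^ 5)⁻¹)) =O[atTop] fun _ ↦ (1 : ℝ) := by
    refine (hV.isBigO_one_add_sq.mul
      (hN.mul (hV.isBigO_inv_deriv_pow 5))).trans_eventuallyEq ?_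
    filter_upwards [eventually_gt_atTop 0] with z hz
    field_simp
  obtain ⟨C, hC⟩ := exists_forall_norm_le_of_continuousOn_Ici hcont hO
  refine ⟨C, fun u hu ↦ ?_⟩
  obtain ⟨z, hz : 0 < z, rfl⟩ := hV.image_Ioi.superset hu
  rw [(hV.hasDerivAt_comp hg hz).deriv]
  simpa [abs_mul, abs_of_pos (show 0 < 1 + V z ^ 2 by positivity)] using hC z hz.le

lemma integral_Ioi (hint : IntegrableOn g (Ioi 0)) :
    ∫ u in Ioi 0, g u = (deriv V 0)⁻¹ - ℓ⁻¹ := by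
  have hderivV (z : ℝ) (_ : z ∈ Ioi 0) : HasDerivWithinAt V (deriv V z) (Ioi 0) z :=
    (hV.hasDerivAt z).hasDerivWithinAt
  have hanti (z : ℝ) (hz : z ∈ Ioi 0) :
      HasDerivAt (fun x ↦ -(deriv V x)⁻¹) (deriv V z • g (V z)) z := by
    have hne : deriv V z ≠ 0 := (hV.deriv_pos z hz.out.le).ne'
    refine ((hV.hasDerivAt_deriv z).inv hne).neg.congr_deriv ?_
    rw [smul_eq_mul, hg z hz]
    field_simp
  have hcont : ContinuousWithinAt (fun x ↦ -(deriv V x)⁻¹) (Ici 0) 0 :=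
    ((hV.hasDerivAt_deriv 0).continuousAt.inv₀ (hV.deriv_pos 0 le_rfl).ne').neg.continuousWithinAt
  rw [← hV.image_Ioi, integrableOn_image_iff_integrableOn_deriv_smul_of_monotoneOn
    measurableSet_Ioi hderivV hV.monotoneOn] at hint
  rw [← hV.image_Ioi, integral_image_eq_integral_deriv_smul_of_monotoneOn
    measurableSet_Ioi hderivV hV.monotoneOn, integral_Ioi_of_hasDerivAt_of_tendsto hcont hanti hint
    (hV.tendsto_deriv.inv₀ hV.slope_pos.ne').neg]
  ring

end VelocityVariable

end IsShearProfile

section RapidDecay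

lemma isBigO_inv_pow_of_tendsto {f : ℝ → ℝ} {n : ℕ} {c : ℝ}
    (h : Tendsto (fun z ↦ z ^ n * f z) atTop (𝓝 c)) : f =O[atTop] fun z ↦ (z ^ n)⁻¹ := by
  refine (((isBigO_refl (fun z : ℝ ↦ (z ^ n)⁻¹) atTop).mul (h.isBigO_one ℝ)).congr' ?_ ?_)
  · filter_upwards [eventually_gt_atTop 0] with z hz
    field_simp
  · simp

lemma iteratedDeriv_sub_id {V : ℝ → ℝ} {n : ℕ} (hV : ContDiff ℝ n V) (z : ℝ) :
    iteratedDeriv n (fun w ↦ V w - w) z =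
      iteratedDeriv n V z - if n = 0 then z else if n = 1 then 1 else 0 := by
  rw [iteratedDeriv_fun_sub hV.contDiffAt contDiffAt_fun_id, iteratedDeriv_fun_id]

lemma isShearProfile_one_of_tendsto {V : ℝ → ℝ} (hV : ContDiff ℝ 3 V) (hV0 : V 0 = 0)
    (hpos : ∀ z, 0 ≤ z → 0 < deriv V z)
    (hdecay : ∀ n : ℕ, 1 ≤ n → ∀ p : ℕ,
      Tendsto (fun z : ℝ ↦ z ^ p * iteratedDeriv n (fun w ↦ V w - w) z) atTop (𝓝 0)) :
    IsShearProfile V 1 where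
  contDiff := hV
  map_zero := hV0
  deriv_pos := hpos
  slope_pos := one_pos
  tendsto_deriv := by
    have h := hdecay 1 le_rfl 0
    simp_rw [iteratedDeriv_sub_id (n := 1) (hV.of_le (by norm_num))] at h
    simpa using h.add_const 1
  isBigO_deriv_two := by
    have h := hdecay 2 one_le_two 4
    simp_rw [iteratedDeriv_sub_id (n := 2) (hV.of_le (by norm_num))] at h
    exact isBigO_inv_pow_of_tendsto (by simpa [iteratedDeriv_succ] using h)
  isBigO_deriv_three := by
    have h := hdecay 3 (by norm_num) 2
    simp_rw [iteratedDeriv_sub_id (n := 3) (hV.of_le (by norm_num))] at h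
    exact isBigO_inv_pow_of_tendsto (by simpa [iteratedDeriv_succ] using h)

end RapidDecay

theorem Splus_Sminus_finite_general {V g : ℝ → ℝ} {ℓ : ℝ} (hV : IsShearProfile V ℓ)
    (hg : ∀ z, 0 < z → g (V z) = deriv (deriv V) z / deriv V z ^ 3)
    (hiso : ∀ a, 0 < a → g a = 0 → ∀ᶠ u in 𝓝[≠] a, g u ≠ 0) :
    {a | 0 < a ∧ g a = 0 ∧ ∃ L, HasPV g a L ∧ 0 < -1 / deriv V 0 + a * L}.Finite := by
  obtain ⟨C, hC⟩ := hV.exists_decay hg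
  obtain ⟨C', hC'⟩ := hV.exists_deriv_decay hg
  have hdiff (u : ℝ) (hu : 0 < u) : DifferentiableAt ℝ g u := hV.differentiableAt hg hu
  have hcont : ContinuousOn g (Ioi 0) := fun u hu ↦ (hdiff u hu).continuousAt.continuousWithinAt
  have hint : IntegrableOn g (Ioi 0) := by
    simpa using integrableOn_pow_mul_of_decay zero_le_two hcont hC
  have hlip : LipschitzOnWith (2 * C + C').toNNReal g (Ioi 0) := by
    simpa using lipschitzOnWith_pow_mul_of_decay zero_le_two hdiff hC hC'
  have hsub : ∫ u in Ioi 0, g u < (deriv V 0)⁻¹ := by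
    rw [hV.integral_Ioi hg hint]
    exact sub_lt_self _ (inv_pos.2 hV.slope_pos)
  refine (finite_zeros_hasPV_of_lt_mul (inv_pos.2 (hV.deriv_pos 0 le_rfl)) hlip
    (lipschitzOnWith_pow_mul_of_decay le_rfl hdiff hC hC') hint
    (integrableOn_pow_mul_of_decay le_rfl hcont hC) hsub hiso).subset ?_
  rintro a ⟨ha, hga, L, hL, hpos⟩
  refine ⟨ha, hga, L, hL, ?_⟩
  rwa [neg_div, one_div, neg_add_eq_sub, sub_pos] at hpos

/-- if `g` is strictly monotone near each of its positive zeroes, then the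
sets defining `n₊` and `n₋` are finite. -/
theorem Splus_Sminus_finite
    (Vs : ℝ → ℝ) (As : ℝ)
    (hVs_smooth : ContDiff ℝ (⊤ : ℕ∞) Vs)
    (hVs0 : Vs 0 = 0)
    (hVs'pos : ∀ z : ℝ, 0 ≤ z → 0 < deriv Vs z)
    (hdecay : ∀ p : ℕ, Tendsto (fun z : ℝ => z ^ p * (Vs z - z - As)) atTop (nhds 0))
    (hderiv_decay : ∀ n : ℕ, 1 ≤ n → ∀ p : ℕ,
      Tendsto (fun z : ℝ => z ^ p * iteratedDeriv n (fun w => Vs w - w) z) atTop (nhds 0))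
    (g : ℝ → ℝ)
    (hg : ∀ z : ℝ, 0 ≤ z → g (Vs z) = deriv (deriv Vs) z / (deriv Vs z) ^ 3)
    (hmono : ∀ a : ℝ, 0 < a → g a = 0 → ∃ ε > (0 : ℝ),
      StrictMonoOn g (Set.Ioo (a - ε) (a + ε)) ∨ StrictAntiOn g (Set.Ioo (a - ε) (a + ε)))
    :
    (Splus Vs g).Finite ∧ (Sminus Vs g).Finite := by
  have hV := isShearProfile_one_of_tendsto (hVs_smooth.of_le (by norm_cast)) hVs0 hVs'pos
    hderiv_decay
  have hfin := Splus_Sminus_finite_general hV (fun z hz ↦ hg z hz.le) fun a ha hga ↦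
    have ⟨ε, hε, h⟩ := hmono a ha hga
    eventually_ne_zero_of_strictMonoOn_or_strictAntiOn hε hga h
  exact ⟨hfin.subset fun a ⟨ha, hga, hL, _⟩ ↦ ⟨ha, hga, hL⟩,
    hfin.subset fun a ⟨ha, hga, hL, _⟩ ↦ ⟨ha, hga, hL⟩⟩
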